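/- Define the modified Adomian recursion u₀ = f₀(x) + g(x)·t, u₁ = ∫₀ᵗ F[u₀] ds, and uₖ = ∫₀ᵗ (F[u⁽ᵏ⁻¹⁾] − F[u⁽ᵏ⁻²⁾]) ds for k ≥ 2, where u⁽ᵏ⁾ = Σᵢ₌₀ᵏ uᵢ. If F is analytic in its arguments with F[0] = 0, then for each k ≥ 1 there is an analytic function hₖ(x,t) with uₖ(x,t) = tᵏ·hₖ(x,t). Consequently, if u⁽ᵏ⁾ = a₀ + a₁ t + a₂ t² + ⋯ and u⁽ᵏ⁺¹⁾ = b₀ + b₁ t + b₂ t² + ⋯ as power series in t, then aₛ = bₛ for all s ≤ k. -/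

import Mathlib

/-- The jet functional: `F[u](x,t) = Φ(u(x,t), u_x(x,t), …, u_{xⁿ}(x,t))`. -/
noncomputable def adomianF (n : ℕ) (Φ : (Fin (n + 1) → ℝ) → ℝ)
    (v : ℝ → ℝ → ℝ) (x t : ℝ) : ℝ :=
  Φ (fun i => iteratedDeriv (i : ℕ) (fun y => v y t) x)

/-- `u⁽ᵏ⁾ = Σᵢ₌₀ᵏ uᵢ`, the k-th partial sum of the decomposition series. -/
noncomputable def adomianPartialSum (u : ℕ → ℝ → ℝ → ℝ) (k : ℕ) (x t : ℝ) : ℝ :=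
  ∑ i ∈ Finset.range (k + 1), u i x t

/-!
Since `Φ (A + C) - Φ A = K (A, C) C` with `K` analytic, and since `x`-derivatives commute with
multiplication by `tᵏ`, adding to `v` a function divisible by `tᵏ` changes `F[v]` by a function
divisible by `tᵏ`. Integration from `0` to `t` gains one more factor `t`: rescaling the variable by
`s = σ t` turns `∫₀ᵗ sᵏ h(x, s) ds` into `tᵏ⁺¹ ∫₀¹ σᵏ h(x, σ t) dσ`, an integral over a fixed
interval, which depends analytically on `(x, t)`. By induction, `uₖ` is divisible by `tᵏ`.
-/

section PowerSeriesIntegral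

open MeasureTheory Set
open scoped NNReal ENNReal

variable {α 𝕜 E F : Type*} [MeasurableSpace α] {μ : Measure α} [IsFiniteMeasure μ] [RCLike 𝕜]
  [NormedAddCommGroup E] [NormedSpace 𝕜 E]
  [NormedAddCommGroup F] [NormedSpace 𝕜 F] [NormedSpace ℝ F]

theorem hasFPowerSeriesOnBall_integral {f : α → E → F} {p : α → FormalMultilinearSeries 𝕜 E F}
    {c : ℕ → ℝ} {x : E} {r : ℝ≥0} (hr : 0 < r)
    (hf : ∀ᵐ a ∂μ, ∀ y, ‖y‖ < r → HasSum (fun k => p a k fun _ => y) (f a (x + y)))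
    (hp : ∀ k, AEStronglyMeasurable (fun a => p a k) μ)
    (hpc : ∀ᵐ a ∂μ, ∀ k, ‖p a k‖ ≤ c k) (hc : Summable fun k => c k * r ^ k) :
    HasFPowerSeriesOnBall (fun y => ∫ a, f a y ∂μ) (fun k => ∫ a, p a k ∂μ) x r where
  r_le := by
    refine FormalMultilinearSeries.le_radius_of_summable _
      ((hc.mul_left (μ.real univ)).of_nonneg_of_le (fun k => by positivity) fun k => ?_)
    have : ‖∫ a, p a k ∂μ‖ ≤ c k * μ.real univ :=
      norm_integral_le_of_norm_le_const (hpc.mono fun a ha => ha k)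
    calc ‖∫ a, p a k ∂μ‖ * (r : ℝ) ^ k ≤ c k * μ.real univ * r ^ k := by gcongr
      _ = μ.real univ * (c k * r ^ k) := by ring
  r_pos := by exact_mod_cast hr
  hasSum {y} hy := by
    have hyr : ‖y‖ < r := by
      rwa [Metric.eball_coe, mem_ball_zero_iff] at hy
    have happly (k : ℕ) : (∫ a, p a k ∂μ) (fun _ => y) = ∫ a, p a k (fun _ => y) ∂μ :=
      ContinuousMultilinearMap.integral_apply
        ((integrable_const (c k)).mono' (hp k) (hpc.mono fun a ha => ha k)) _
    have hbound (k : ℕ) : ∀ᵐ a ∂μ, ‖p a k fun _ => y‖ ≤ c k * r ^ k := by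
      filter_upwards [hpc] with a ha
      have : 0 ≤ c k := (norm_nonneg _).trans (ha k)
      calc ‖p a k fun _ => y‖ ≤ c k * ‖y‖ ^ k := by
            simpa using (p a k).le_of_opNorm_le (ha k) fun _ => y
        _ ≤ c k * r ^ k := by gcongr
    simp only [happly]
    exact hasSum_integral_of_dominated_convergence (fun k _ => c k * r ^ k)
      (fun k => (ContinuousMultilinearMap.apply 𝕜 (fun _ : Fin k => E) F
        fun _ => y).continuous.comp_aestronglyMeasurable (hp k))
      hbound (.of_forall fun _ => hc) (integrable_const _)
      (hf.mono fun a ha => ha y hyr)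

variable {G : Type*} [NormedAddCommGroup G] [NormedSpace 𝕜 G]

theorem analyticAt_integral_comp_clm {f : G → F} {L : α → E →L[𝕜] G} {x : G} {C : ℝ≥0}
    (hf : AnalyticAt 𝕜 f x) (hL : AEStronglyMeasurable L μ) (hLC : ∀ᵐ a ∂μ, ‖L a‖ ≤ C) :
    AnalyticAt 𝕜 (fun y => ∫ a, f (x + L a y) ∂μ) 0 := by
  obtain ⟨p, r, hp⟩ := hf
  obtain ⟨ρ, hρ, hρr⟩ := ENNReal.lt_iff_exists_nnreal_btwn.1 hp.r_pos
  have hρ₀ : 0 < ρ := by exact_mod_cast hρ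
  set δ := ρ / (C + 1)
  have hδ₀ : 0 < δ := by positivity
  have hCδ : C * δ ≤ ρ :=
    calc C * δ ≤ (C + 1) * δ := by gcongr; exact le_self_add
      _ = ρ := mul_div_cancel₀ ρ (by positivity)
  have hsum : Summable fun k => ‖p k‖ * C ^ k * δ ^ k := by
    refine (p.summable_norm_mul_pow (hρr.trans_le hp.r_le)).of_nonneg_of_le
      (fun k => by positivity) fun k => ?_
    rw [mul_assoc, ← mul_pow]
    gcongr
    exact_mod_cast hCδ
  refine (hasFPowerSeriesOnBall_integral (p := fun a => p.compContinuousLinearMap (L a))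
    hδ₀ (hLC.mono fun a ha y hy => ?_) (fun k => ?_) (hLC.mono fun a ha k => ?_)
    hsum).analyticAt
  · have hLy : ‖L a y‖ ≤ ρ :=
      calc ‖L a y‖ ≤ C * δ := (L a).le_of_opNorm_le_of_le ha hy.le
        _ ≤ ρ := by exact_mod_cast hCδ
    have hLy_mem : L a y ∈ Metric.eball (0 : G) r := by
      rw [mem_eball_zero_iff]
      exact (enorm_le_coe.2 hLy).trans_lt hρr
    simpa only [zero_add, FormalMultilinearSeries.compContinuousLinearMap_apply,
      Function.comp_def] using hp.hasSum hLy_mem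
  · have : Continuous fun u : E →L[𝕜] G =>
        (p k).compContinuousLinearMapLRight (E := fun _ => E) fun _ => u :=
      ContinuousMultilinearMap.coe_continuous _ |>.comp (continuous_pi fun _ => continuous_id)
    exact this.comp_aestronglyMeasurable hL
  · exact (p.norm_compContinuousLinearMap_le _ _).trans (by gcongr)

end PowerSeriesIntegral

section IntervalIntegral

open MeasureTheory Set
open scoped Interval Topology

variable {E F : Type*} [NormedAddCommGroup E] [NormedSpace ℝ E]
  [NormedAddCommGroup F] [NormedSpace ℝ F]

/- The substitution `s = t₀ + σ (t - t₀)` expresses the integral as `t - t₀` times an average of `f`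
over the maps `L σ` below, all centred at `(z₀, t₀)`, where one power series of `f` serves every
`σ`. -/
theorem analyticAt_intervalIntegral_right {f : E × ℝ → F} {z₀ : E} {t₀ : ℝ}
    (hf : AnalyticAt ℝ f (z₀, t₀)) :
    AnalyticAt ℝ (fun q : E × ℝ => ∫ s in t₀..q.2, f (q.1, s)) (z₀, t₀) := by
  let L (σ : ℝ) : E × ℝ →L[ℝ] E × ℝ :=
    (ContinuousLinearMap.fst ℝ E ℝ).prod (σ • ContinuousLinearMap.snd ℝ E ℝ)
  have hL : Continuous L :=
    (ContinuousLinearMap.prodₗᵢ ℝ).continuous.comp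
      (continuous_const.prodMk (continuous_id.smul continuous_const))
  have hL_norm (σ : ℝ) (hσ : σ ∈ Ioc (0 : ℝ) 1) : ‖L σ‖ ≤ (1 : NNReal) := by
    refine ContinuousLinearMap.opNorm_le_bound _ zero_le_one fun y => ?_
    have hσy : ‖σ • y.2‖ ≤ ‖y.2‖ := by
      rw [norm_smul, Real.norm_of_nonneg hσ.1.le]
      exact mul_le_of_le_one_left (norm_nonneg _) hσ.2
    rw [NNReal.coe_one, one_mul]
    exact max_le_max le_rfl hσy
  have hmean : AnalyticAt ℝ
      (fun y => ∫ σ in Ioc (0 : ℝ) 1, f ((z₀, t₀) + L σ y)) (0 : E × ℝ) :=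
    analyticAt_integral_comp_clm hf hL.aestronglyMeasurable
      ((ae_restrict_mem measurableSet_Ioc).mono hL_norm)
  have hmean_sub : AnalyticAt ℝ
      (fun q : E × ℝ => ∫ σ in Ioc (0 : ℝ) 1, f ((z₀, t₀) + L σ (q - (z₀, t₀)))) (z₀, t₀) :=
    hmean.comp_of_eq (analyticAt_id.sub analyticAt_const) (sub_self _)
  have hsub : AnalyticAt ℝ (fun q : E × ℝ => q.2 - t₀) (z₀, t₀) :=
    analyticAt_snd.sub analyticAt_const
  refine (hsub.smul hmean_sub).congr (.of_forall fun q => ?_)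
  calc (q.2 - t₀) • ∫ σ in Ioc (0 : ℝ) 1, f ((z₀, t₀) + L σ (q - (z₀, t₀)))
      = (q.2 - t₀) • ∫ σ in (0 : ℝ)..1, f (q.1, t₀ + (q.2 - t₀) * σ) := by
        simp [L, intervalIntegral.integral_of_le, mul_comm]
    _ = ∫ s in t₀..q.2, f (q.1, s) := by
        simpa using intervalIntegral.smul_integral_comp_add_mul (a := 0) (b := 1)
          (fun s => f (q.1, s)) (q.2 - t₀) t₀

/- That `z ↦ ∫ τ in s..t, f (z, τ)` is analytic at `z₀` is an equivalence relation in `s`, `t`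
with open classes, so it holds for all `s`, `t` in the connected set `[[a, b]]`. -/
theorem analyticAt_intervalIntegral_param [CompleteSpace F] {f : E × ℝ → F} {z₀ : E} {a b : ℝ}
    (hf : ∀ s ∈ [[a, b]], AnalyticAt ℝ f (z₀, s)) :
    AnalyticAt ℝ (fun z => ∫ s in a..b, f (z, s)) z₀ := by
  have hint : ∀ᶠ z in 𝓝 z₀, ContinuousOn (fun s => f (z, s)) [[a, b]] := by
    have : ∀ᶠ z in 𝓝 z₀, ∀ s ∈ [[a, b]], AnalyticAt ℝ f (z, s) :=
      isCompact_uIcc.eventually_forall_of_forall_eventually fun s hs => by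
        simpa using (hf s hs).eventually_analyticAt
    filter_upwards [this] with z hz s hs
    exact (hz s hs).continuousAt.comp_continuousWithinAt (by fun_prop)
  refine isPreconnected_uIcc.induction₂
    (fun s t => AnalyticAt ℝ (fun z => ∫ τ in s..t, f (z, τ)) z₀)
    (fun s hs => ?_) (fun r s t hr hs ht hrs hst => ?_) (fun s t _ _ hst => ?_)
    left_mem_uIcc right_mem_uIcc
  · have hnear : ∀ᶠ t in 𝓝 s, AnalyticAt ℝ (fun q : E × ℝ => ∫ τ in s..q.2, f (q.1, τ)) (z₀, t) :=
      (Continuous.prodMk_right z₀).continuousAt.eventually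
        (analyticAt_intervalIntegral_right (hf s hs)).eventually_analyticAt
    filter_upwards [hnear.filter_mono nhdsWithin_le_nhds] with t ht
    exact ht.comp_of_eq (analyticAt_id.prod analyticAt_const) rfl
  · refine (hrs.add hst).congr ?_
    filter_upwards [hint] with z hz
    exact intervalIntegral.integral_add_adjacent_intervals
      (hz.mono (uIcc_subset_uIcc hr hs)).intervalIntegrable
      (hz.mono (uIcc_subset_uIcc hs ht)).intervalIntegrable
  · simp only [intervalIntegral.integral_symm s t]
    exact hst.neg

theorem exists_analyticOnNhd_add_sub_eq [CompleteSpace F] {Φ : E → F}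
    (hΦ : AnalyticOnNhd ℝ Φ univ) :
    ∃ K : E × E → E →L[ℝ] F, AnalyticOnNhd ℝ K univ ∧
      ∀ a c, Φ (a + c) - Φ a = K (a, c) c := by
  have hΦ' (x : E) : AnalyticAt ℝ (fderiv ℝ Φ) x := hΦ.fderiv x (mem_univ x)
  refine ⟨fun q => ∫ σ in (0 : ℝ)..1, fderiv ℝ Φ (q.1 + σ • q.2), fun q _ => ?_, fun a c => ?_⟩
  · refine analyticAt_intervalIntegral_param
      (f := fun w : (E × E) × ℝ => fderiv ℝ Φ (w.1.1 + w.2 • w.1.2)) fun σ _ => ?_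
    exact (hΦ' _).comp_of_eq ((analyticAt_fst.comp analyticAt_fst).add
      (analyticAt_snd.smul (analyticAt_snd.comp analyticAt_fst))) rfl
  · have hcont : Continuous fun σ : ℝ => fderiv ℝ Φ (a + σ • c) :=
      (continuous_iff_continuousAt.2 fun x => (hΦ' x).continuousAt).comp (by fun_prop)
    have hderiv (σ : ℝ) : HasDerivAt (fun σ : ℝ => Φ (a + σ • c)) (fderiv ℝ Φ (a + σ • c) c) σ := by
      have hline : HasDerivAt (fun σ : ℝ => a + σ • c) c σ := by
        simpa using ((hasDerivAt_id σ).smul_const c).const_add a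
      exact (hΦ _ (mem_univ _)).differentiableAt.hasFDerivAt.comp_hasDerivAt σ hline
    rw [ContinuousLinearMap.intervalIntegral_apply (hcont.intervalIntegrable _ _),
      intervalIntegral.integral_eq_sub_of_hasDerivAt (fun σ _ => hderiv σ)
        ((hcont.clm_apply continuous_const).intervalIntegrable _ _)]
    simp

end IntervalIntegral

section Jets

open Set

variable {𝕜 E F : Type*} [NontriviallyNormedField 𝕜] [NormedAddCommGroup E] [NormedSpace 𝕜 E]
  [NormedAddCommGroup F] [NormedSpace 𝕜 F]

theorem analyticOnNhd_iteratedDeriv_fst [CompleteSpace F] {v : 𝕜 → E → F}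
    (hv : AnalyticOnNhd 𝕜 (fun p : 𝕜 × E => v p.1 p.2) univ) (i : ℕ) :
    AnalyticOnNhd 𝕜 (fun p : 𝕜 × E => iteratedDeriv i (fun y => v y p.2) p.1) univ := by
  induction i with
  | zero => simpa only [iteratedDeriv_zero] using hv
  | succ i ih =>
    set w : 𝕜 × E → F := fun p => iteratedDeriv i (fun y => v y p.2) p.1
    have hpartial (p : 𝕜 × E) :
        iteratedDeriv (i + 1) (fun y => v y p.2) p.1 = fderiv 𝕜 w p (1, 0) := by
      rw [iteratedDeriv_succ]
      exact ((ih p (mem_univ _)).differentiableAt.hasFDerivAt.comp_hasDerivAt p.1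
        ((hasDerivAt_id p.1).prodMk (hasDerivAt_const p.1 p.2))).deriv
    simp only [hpartial]
    exact (ContinuousLinearMap.apply 𝕜 F ((1, 0) : 𝕜 × E)).comp_analyticOnNhd ih.fderiv

end Jets

section DvdPow

open Set

variable {E F : Type*} [NormedAddCommGroup E] [NormedSpace ℝ E]
  [NormedAddCommGroup F] [NormedSpace ℝ F] {k : ℕ}

/-- `v(x, t) = tᵏ h(x, t)` for some jointly analytic `h`: divisibility by `tᵏ` among the
functions analytic on all of `E × ℝ`, the measure of smallness in `t` that drives the induction. -/
def AnalyticDvdPow (k : ℕ) (v : E → ℝ → F) : Prop :=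
  ∃ h : E → ℝ → F, AnalyticOnNhd ℝ (fun p : E × ℝ => h p.1 p.2) univ ∧
    ∀ x t, v x t = t ^ k • h x t

theorem AnalyticDvdPow.analyticOnNhd {v : E → ℝ → F} (hv : AnalyticDvdPow k v) :
    AnalyticOnNhd ℝ (fun p : E × ℝ => v p.1 p.2) univ := by
  obtain ⟨h, hh, hvh⟩ := hv
  simp only [hvh]
  exact fun p hp => (analyticAt_snd.pow k).smul (hh p hp)

theorem analyticDvdPow_zero_iff {v : E → ℝ → F} :
    AnalyticDvdPow 0 v ↔ AnalyticOnNhd ℝ (fun p : E × ℝ => v p.1 p.2) univ :=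
  ⟨AnalyticDvdPow.analyticOnNhd, fun hv => ⟨v, hv, fun x t => by rw [pow_zero, one_smul]⟩⟩

theorem AnalyticDvdPow.intervalIntegral [CompleteSpace F] {v : E → ℝ → F}
    (hv : AnalyticDvdPow k v) :
    AnalyticDvdPow (k + 1) fun x t => ∫ s in (0 : ℝ)..t, v x s := by
  obtain ⟨h, hh, hvh⟩ := hv
  refine ⟨fun x t => ∫ σ in (0 : ℝ)..1, σ ^ k • h x (σ * t), fun q _ => ?_, fun x t => ?_⟩
  · refine analyticAt_intervalIntegral_param
      (f := fun w : (E × ℝ) × ℝ => w.2 ^ k • h w.1.1 (w.2 * w.1.2)) fun σ _ => ?_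
    refine (analyticAt_snd.pow k).smul ?_
    exact (hh _ (mem_univ _)).comp_of_eq (g := fun p : E × ℝ => h p.1 p.2)
      ((analyticAt_fst.comp analyticAt_fst).prod
        (analyticAt_snd.mul (analyticAt_snd.comp analyticAt_fst))) rfl
  · calc ∫ s in (0 : ℝ)..t, v x s
        = t • ∫ σ in (0 : ℝ)..1, v x (t * σ) := by
          simp
      _ = t • ∫ σ in (0 : ℝ)..1, t ^ k • σ ^ k • h x (σ * t) := by
          simp only [hvh, mul_pow, mul_smul, mul_comm t, smul_comm (t ^ k)]
      _ = t ^ (k + 1) • ∫ σ in (0 : ℝ)..1, σ ^ k • h x (σ * t) := by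
          rw [intervalIntegral.integral_smul, smul_smul, pow_succ']

theorem AnalyticDvdPow.iteratedDeriv_eq_zero [CompleteSpace F] {v : E → ℝ → F}
    (hv : AnalyticDvdPow k v) {s : ℕ} (hs : s < k) (x : E) : iteratedDeriv s (v x) 0 = 0 := by
  have hvx : AnalyticAt ℝ (v x) 0 := hv.analyticOnNhd.along_snd 0 (mem_univ _)
  obtain ⟨h, hh, hvh⟩ := hv
  have horder : k ≤ analyticOrderAt (v x) 0 :=
    (natCast_le_analyticOrderAt hvx).2
      ⟨h x, hh.along_snd 0 (mem_univ _), .of_forall fun t => by rw [hvh, sub_zero]⟩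
  exact (natCast_le_analyticOrderAt_iff_iteratedDeriv_eq_zero hvx).1 horder s hs

end DvdPow

section Adomian

open Set

variable {n : ℕ} {Φ : (Fin (n + 1) → ℝ) → ℝ} {k : ℕ}

/-- The `n`-jet `(v, vₓ, …, v_{xⁿ})` of `v` in `x`, at which `adomianF n Φ v` evaluates `Φ`. -/
noncomputable def adomianJet (n : ℕ) (v : ℝ → ℝ → ℝ) (x t : ℝ) : Fin (n + 1) → ℝ :=
  fun i => iteratedDeriv (i : ℕ) (fun y => v y t) x

theorem analyticOnNhd_adomianJet (n : ℕ) {v : ℝ → ℝ → ℝ}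
    (hv : AnalyticOnNhd ℝ (fun p : ℝ × ℝ => v p.1 p.2) univ) :
    AnalyticOnNhd ℝ (fun p : ℝ × ℝ => adomianJet n v p.1 p.2) univ :=
  AnalyticOnNhd.pi fun i => analyticOnNhd_iteratedDeriv_fst hv i

theorem adomianJet_add (n : ℕ) {v w : ℝ → ℝ → ℝ}
    (hv : AnalyticOnNhd ℝ (fun p : ℝ × ℝ => v p.1 p.2) univ)
    (hw : AnalyticOnNhd ℝ (fun p : ℝ × ℝ => w p.1 p.2) univ) (x t : ℝ) :
    adomianJet n (v + w) x t = adomianJet n v x t + adomianJet n w x t := by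
  ext i
  exact iteratedDeriv_fun_add (hv.along_fst x (mem_univ _)).contDiffAt
    (hw.along_fst x (mem_univ _)).contDiffAt

theorem adomianJet_mul_left (n : ℕ) (c : ℝ → ℝ) (v : ℝ → ℝ → ℝ) (x t : ℝ) :
    adomianJet n (fun x t => c t * v x t) x t = c t • adomianJet n v x t := by
  ext i
  exact iteratedDeriv_const_mul_field (c t) fun y => v y t

theorem analyticOnNhd_adomianF (hΦ : AnalyticOnNhd ℝ Φ univ) {v : ℝ → ℝ → ℝ}
    (hv : AnalyticOnNhd ℝ (fun p : ℝ × ℝ => v p.1 p.2) univ) :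
    AnalyticOnNhd ℝ (fun p : ℝ × ℝ => adomianF n Φ v p.1 p.2) univ :=
  hΦ.comp (analyticOnNhd_adomianJet n hv) (mapsTo_univ _ _)

theorem AnalyticDvdPow.adomianF_add_sub (hΦ : AnalyticOnNhd ℝ Φ univ) {v w : ℝ → ℝ → ℝ}
    (hv : AnalyticOnNhd ℝ (fun p : ℝ × ℝ => v p.1 p.2) univ) (hw : AnalyticDvdPow k w) :
    AnalyticDvdPow k fun x t => adomianF n Φ (v + w) x t - adomianF n Φ v x t := by
  have hjet_add := adomianJet_add n hv hw.analyticOnNhd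
  obtain ⟨h, hh, hwh⟩ := hw
  obtain rfl : w = fun x t => t ^ k * h x t := funext₂ hwh
  obtain ⟨K, hK, hΦK⟩ := exists_analyticOnNhd_add_sub_eq hΦ
  refine ⟨fun x t => K (adomianJet n v x t, t ^ k • adomianJet n h x t) (adomianJet n h x t),
    fun p hp => ?_, fun x t => ?_⟩
  · have hjet_v := analyticOnNhd_adomianJet n hv p hp
    have hjet_h := analyticOnNhd_adomianJet n hh p hp
    have hKp := (hK _ (mem_univ _)).comp (hjet_v.prod ((analyticAt_snd.pow k).smul hjet_h))
    exact ((ContinuousLinearMap.id ℝ ((Fin (n + 1) → ℝ) →L[ℝ] ℝ)).analyticAt_bilinear _).comp₂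
      hKp hjet_h
  · calc adomianF n Φ (v + fun x t => t ^ k * h x t) x t - adomianF n Φ v x t
        = Φ (adomianJet n v x t + t ^ k • adomianJet n h x t) - Φ (adomianJet n v x t) := by
          rw [← adomianJet_mul_left n (· ^ k), ← hjet_add]
          rfl
      _ = K (adomianJet n v x t, t ^ k • adomianJet n h x t) (t ^ k • adomianJet n h x t) :=
          hΦK _ _
      _ = _ := map_smul _ _ _

theorem adomianPartialSum_succ (u : ℕ → ℝ → ℝ → ℝ) (k : ℕ) :
    adomianPartialSum u (k + 1) = adomianPartialSum u k + u (k + 1) := by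
  ext x t
  exact Finset.sum_range_succ _ _

theorem adomian_recursion_analyticDvdPow (hΦ : AnalyticOnNhd ℝ Φ univ) {u : ℕ → ℝ → ℝ → ℝ}
    (hu0 : AnalyticOnNhd ℝ (fun p : ℝ × ℝ => u 0 p.1 p.2) univ)
    (hu1 : ∀ x t, u 1 x t = ∫ s in (0 : ℝ)..t, adomianF n Φ (u 0) x s)
    (huk : ∀ k, 2 ≤ k → ∀ x t, u k x t =
      ∫ s in (0 : ℝ)..t,
        (adomianF n Φ (adomianPartialSum u (k - 1)) x s -
          adomianF n Φ (adomianPartialSum u (k - 2)) x s)) (k : ℕ) :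
    AnalyticOnNhd ℝ (fun p : ℝ × ℝ => adomianPartialSum u k p.1 p.2) univ ∧
      AnalyticDvdPow (k + 1) (u (k + 1)) := by
  induction k with
  | zero =>
    have hu1' : u 1 = fun x t => ∫ s in (0 : ℝ)..t, adomianF n Φ (u 0) x s := funext₂ hu1
    rw [zero_add, hu1']
    exact ⟨by simpa [adomianPartialSum] using hu0,
      (analyticDvdPow_zero_iff.2 (analyticOnNhd_adomianF hΦ hu0)).intervalIntegral⟩
  | succ k ih =>
    obtain ⟨hS, hu⟩ := ih
    have hrec : u (k + 2) = fun x t => ∫ s in (0 : ℝ)..t,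
        (adomianF n Φ (adomianPartialSum u k + u (k + 1)) x s -
          adomianF n Φ (adomianPartialSum u k) x s) := by
      ext x t
      rw [huk _ (Nat.le_add_left 2 k), ← adomianPartialSum_succ]
      rfl
    refine ⟨?_, ?_⟩
    · rw [adomianPartialSum_succ]
      exact hS.add hu.analyticOnNhd
    · rw [hrec]
      exact (hu.adomianF_add_sub hΦ hS).intervalIntegral

end Adomian

theorem adomian_modified_homogeneity_general
    (n : ℕ) (Φ : (Fin (n + 1) → ℝ) → ℝ)
    (hΦ : AnalyticOnNhd ℝ Φ Set.univ) (u : ℕ → ℝ → ℝ → ℝ)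
    (hu0 : AnalyticOnNhd ℝ (fun p : ℝ × ℝ => u 0 p.1 p.2) Set.univ)
    (hu1 : ∀ x t : ℝ, u 1 x t = ∫ s in (0:ℝ)..t, adomianF n Φ (u 0) x s)
    (huk : ∀ k, 2 ≤ k → ∀ x t : ℝ, u k x t =
      ∫ s in (0:ℝ)..t,
        (adomianF n Φ (adomianPartialSum u (k - 1)) x s -
          adomianF n Φ (adomianPartialSum u (k - 2)) x s)) :
    (∀ k, 1 ≤ k → ∃ h : ℝ → ℝ → ℝ,
      AnalyticOnNhd ℝ (fun p : ℝ × ℝ => h p.1 p.2) Set.univ ∧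
        ∀ x t : ℝ, u k x t = t ^ k * h x t) ∧
    ∀ k s : ℕ, s ≤ k → ∀ x : ℝ,
      iteratedDeriv s (fun t => adomianPartialSum u k x t) 0 =
        iteratedDeriv s (fun t => adomianPartialSum u (k + 1) x t) 0 := by
  refine ⟨fun k hk => ?_, fun k s hs x => ?_⟩
  · obtain ⟨k, rfl⟩ := Nat.exists_eq_add_of_le' hk
    exact (adomian_recursion_analyticDvdPow hΦ hu0 hu1 huk k).2
  · obtain ⟨hS, hu⟩ := adomian_recursion_analyticDvdPow hΦ hu0 hu1 huk k
    have hSx : AnalyticAt ℝ (adomianPartialSum u k x) 0 := hS.along_snd 0 (Set.mem_univ _)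
    have hux : AnalyticAt ℝ (u (k + 1) x) 0 := hu.analyticOnNhd.along_snd 0 (Set.mem_univ _)
    rw [adomianPartialSum_succ]
    calc iteratedDeriv s (adomianPartialSum u k x) 0
        = iteratedDeriv s (adomianPartialSum u k x) 0 + iteratedDeriv s (u (k + 1) x) 0 := by
          rw [hu.iteratedDeriv_eq_zero (Nat.lt_succ_of_le hs), add_zero]
      _ = iteratedDeriv s (adomianPartialSum u k x + u (k + 1) x) 0 :=
          (iteratedDeriv_add hSx.contDiffAt hux.contDiffAt).symm

/-- Lemma 1: for the modified Adomian recursion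
`u₀ = f₀(x) + g(x)·t`, `u₁ = ∫₀ᵗ F[u₀] ds`, `uₖ = ∫₀ᵗ (F[u⁽ᵏ⁻¹⁾] − F[u⁽ᵏ⁻²⁾]) ds` (k ≥ 2),
with `F` analytic in its jet arguments and `F[0] = 0`, each `uₖ` (k ≥ 1) has the form
`tᵏ·hₖ(x,t)` with `hₖ` analytic; consequently the power-series coefficients in `t` of
`u⁽ᵏ⁾` and `u⁽ᵏ⁺¹⁾` agree up to order `k`. -/
theorem adomian_modified_homogeneity
    (n : ℕ) (Φ : (Fin (n + 1) → ℝ) → ℝ)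
    (hΦ : AnalyticOnNhd ℝ Φ Set.univ) (hΦ0 : Φ 0 = 0)
    (f₀ g : ℝ → ℝ)
    (hf₀ : AnalyticOnNhd ℝ f₀ Set.univ) (hg : AnalyticOnNhd ℝ g Set.univ)
    (u : ℕ → ℝ → ℝ → ℝ)
    (hu0 : ∀ x t : ℝ, u 0 x t = f₀ x + g x * t)
    (hu1 : ∀ x t : ℝ, u 1 x t = ∫ s in (0:ℝ)..t, adomianF n Φ (u 0) x s)
    (huk : ∀ k, 2 ≤ k → ∀ x t : ℝ, u k x t =
      ∫ s in (0:ℝ)..t,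
        (adomianF n Φ (adomianPartialSum u (k - 1)) x s -
          adomianF n Φ (adomianPartialSum u (k - 2)) x s)) :
    (∀ k, 1 ≤ k → ∃ h : ℝ → ℝ → ℝ,
      AnalyticOnNhd ℝ (fun p : ℝ × ℝ => h p.1 p.2) Set.univ ∧
        ∀ x t : ℝ, u k x t = t ^ k * h x t) ∧
    ∀ k s : ℕ, s ≤ k → ∀ x : ℝ,
      iteratedDeriv s (fun t => adomianPartialSum u k x t) 0 =
        iteratedDeriv s (fun t => adomianPartialSum u (k + 1) x t) 0 := by
  refine adomian_modified_homogeneity_general n Φ hΦ u ?_ hu1 huk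
  simp only [hu0]
  exact (hf₀.comp analyticOnNhd_fst (Set.mapsTo_univ _ _)).add
    ((hg.comp analyticOnNhd_fst (Set.mapsTo_univ _ _)).mul analyticOnNhd_snd)
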